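/- Let S = k[x_1,…,x_n] be a polynomial ring over a field k and let M be a monomial ideal with minimal monomial generating set G. Let 𝒟_M be the family of subsets D of G such that D is a dominant set of cardinality n and no element of G strongly divides lcm(D), and let L = {lcm(D) : D ∈ 𝒟_M}. Then the n-th Betti number of S/M equals the number of distinct monomials in L: β_n(S/M) = #L. -/

import Mathlib

open CategoryTheory MvPolynomial

/-- The monomial in `k[x_1,…,x_n]` with exponent vector `a : Fin n → ℕ`. -/
noncomputable def expMon (k : Type) [Field k] {n : ℕ} (a : Fin n → ℕ) :
    MvPolynomial (Fin n) k :=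
  monomial (Finsupp.equivFunOnFinite.symm a) 1

/-- The monomial ideal generated by the monomials with exponent vectors in `A`. -/
noncomputable def monIdeal (k : Type) [Field k] {n : ℕ} (A : Set (Fin n → ℕ)) :
    Ideal (MvPolynomial (Fin n) k) :=
  Ideal.span (expMon k '' A)

/-- The projective dimension of a module, as a value in `ℕ∞`: the least `d` such that there is
a projective resolution vanishing in homological degrees `> d`. -/
noncomputable def projDim (R : Type) [Ring R] (N : ModuleCat R) : ℕ∞ :=
  sInf {d : ℕ∞ | ∃ P : ProjectiveResolution N,
    ∀ i : ℕ, d < (i : ℕ∞) → Limits.IsZero (P.complex.X i)}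

/-- `pd(S/M)`, the projective dimension of `S/M` as an `S`-module. -/
noncomputable def pdQuot (k : Type) [Field k] {n : ℕ} (M : Ideal (MvPolynomial (Fin n) k)) : ℕ∞ :=
  projDim (MvPolynomial (Fin n) k)
    (ModuleCat.of (MvPolynomial (Fin n) k) (MvPolynomial (Fin n) k ⧸ M))

/-- The `i`-th Betti number of `S/M`, i.e. `dim_k Tor_i^S(S/M, k)`, where the residue field
`k = S/(x_1,…,x_n)` and the `k`-vector space structure on `Tor` comes from the base field. -/
noncomputable def betti (k : Type) [Field k] {n : ℕ} (M : Ideal (MvPolynomial (Fin n) k))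
    (i : ℕ) : ℕ :=
  Module.finrank k
    ((ModuleCat.restrictScalars (algebraMap k (MvPolynomial (Fin n) k))).obj
      (((Tor (ModuleCat (MvPolynomial (Fin n) k)) i).obj
          (ModuleCat.of _ (MvPolynomial (Fin n) k ⧸ M))).obj
        (ModuleCat.of _ (MvPolynomial (Fin n) k ⧸
          Ideal.span (Set.range (X : Fin n → MvPolynomial (Fin n) k))))))

/-- `l` strongly divides `l'`: whenever the exponent of `x_i` in `l` is nonzero,
it is strictly smaller than the exponent of `x_i` in `l'`. -/
def StronglyDivides {n : ℕ} (l l' : Fin n → ℕ) : Prop :=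
  ∀ i, l i ≠ 0 → l i < l' i

/-- `m` is a dominant monomial in the set `L`: some variable occurs in `m` with an exponent
strictly larger than its exponent in every other element of `L`. -/
def DominantIn {n : ℕ} (L : Finset (Fin n → ℕ)) (m : Fin n → ℕ) : Prop :=
  ∃ j, ∀ m' ∈ L, m' ≠ m → m' j < m j

/-- `L` is a dominant set: each of its elements is dominant in `L`. -/
def DominantSet {n : ℕ} (L : Finset (Fin n → ℕ)) : Prop :=
  ∀ m ∈ L, DominantIn L m

/-!
Write `e = (1, …, 1)`. The variables form a regular sequence on `S`, and if `x` is a nonzerodivisor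
on `A` with `Tor_{r+1}(N, A) = 0`, then the mapping cone of multiplication by `x` on a projective
resolution of `A` identifies `Tor_{r+1}(N, A/xA)` with the kernel of `x` on `Tor_r(N, A)`. Killing
the variables one at a time therefore turns `Tor_n(S/M, k)` into the socle of `S/M`, which has as a
`k`-basis the monomials `x^u ∉ M` with `x_i x^u ∈ M` for all `i`. For such a `u` choose, for each
`i`, a generator `m_i` dividing `x_i x^u`: since `m_i` does not divide `x^u`, it has exponent
`u_i + 1` at `x_i` and exponent at most `u_j` at every other `x_j`. So the `m_i` form a dominant set
with least common multiple `x^(u+e)`, and a generator strongly divides `x^(u+e)` exactly when it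
divides `x^u`. Conversely, every dominant set of `n` generators whose least common multiple is not
strongly divided by a generator arises in this way.
-/

section Cone
open Limits HomologicalComplex

variable {ι : Type*} {c : ComplexShape ι} [DecidableRel c.Rel] {i j : ι}

section Preadditive

variable {C : Type*} [Category* C] [Preadditive C] {K L : HomologicalComplex C c} (φ : K ⟶ L)
  [HasHomotopyCofiber φ]

lemma comp_homotopyCofiber_d_eq_zero_iff (hij : c.Rel i j) {A : C}
    (x : A ⟶ (homotopyCofiber φ).X i) :
    x ≫ (homotopyCofiber φ).d i j = 0 ↔
      (x ≫ homotopyCofiber.fstX φ i j hij) ≫ K.d j (c.next j) = 0 ∧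
      (x ≫ homotopyCofiber.fstX φ i j hij) ≫ φ.f j +
        (x ≫ homotopyCofiber.sndX φ i) ≫ L.d i j = 0 := by
  have hsnd : (x ≫ (homotopyCofiber φ).d i j) ≫ homotopyCofiber.sndX φ j =
      (x ≫ homotopyCofiber.fstX φ i j hij) ≫ φ.f j +
        (x ≫ homotopyCofiber.sndX φ i) ≫ L.d i j := by
    simp [homotopyCofiber.d_sndX φ i j hij]
  rw [← hsnd]
  by_cases hj : c.Rel j (c.next j)
  · have hfst : (x ≫ (homotopyCofiber φ).d i j) ≫ homotopyCofiber.fstX φ j _ hj =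
        -((x ≫ homotopyCofiber.fstX φ i j hij) ≫ K.d j (c.next j)) := by
      simp [homotopyCofiber.d_fstX φ i j _ hij hj]
    rw [← neg_eq_zero (a := (_ ≫ _) ≫ K.d j _), ← hfst]
    exact ⟨fun h ↦ by simp only [h, zero_comp, and_self],
      fun h ↦ homotopyCofiber.ext_to_X φ j _ hj (by rw [h.1, zero_comp]) (by rw [h.2, zero_comp])⟩
  · rw [K.shape _ _ hj, comp_zero]
    exact ⟨fun h ↦ by simp only [h, zero_comp, and_self],
      fun h ↦ homotopyCofiber.ext_to_X' φ j hj (by rw [h.2, zero_comp])⟩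

lemma exists_homotopyCofiber_d_comp_fstX (hij : c.Rel i j) (h : ι) :
    ∃ y, (homotopyCofiber φ).d h i ≫ homotopyCofiber.fstX φ i j hij = y ≫ K.d i j := by
  by_cases hi : c.Rel h i
  · exact ⟨-homotopyCofiber.fstX φ h i hi, by simp [homotopyCofiber.d_fstX φ h i j hi hij]⟩
  · exact ⟨0, by simp only [(homotopyCofiber φ).shape _ _ hi, zero_comp]⟩

end Preadditive

variable {C : Type*} [Category* C] [Abelian C] {K L : HomologicalComplex C c} (φ : K ⟶ L)
  [HasHomotopyCofiber φ]

/-- The connecting morphism `Hᵢ(cone φ) ⟶ Hⱼ(K)`, for `j` the successor of `i`, in the long exact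
homology sequence of the mapping cone of `φ : K ⟶ L`; it is induced by the projection of the cone
onto `K`, without the sign that would make that projection a morphism of complexes. -/
noncomputable def homotopyCofiberConnecting (hij : c.Rel i j) :
    (homotopyCofiber φ).homology i ⟶ K.homology j :=
  ((homotopyCofiber φ).homologyIsCokernel (c.prev i) i rfl).desc <| CokernelCofork.ofπ
    (K.liftCycles ((homotopyCofiber φ).iCycles i ≫ homotopyCofiber.fstX φ i j hij) _ rfl
      ((comp_homotopyCofiber_d_eq_zero_iff φ hij _).1 (iCycles_d _ _ _)).1 ≫ K.homologyπ j) <| by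
    obtain ⟨y, hy⟩ := exists_homotopyCofiber_d_comp_fstX φ hij (c.prev i)
    rw [K.comp_liftCycles_assoc]
    exact K.liftCycles_homologyπ_eq_zero_of_boundary _ _ _ y (by rw [toCycles_i_assoc, hy])

lemma homologyπ_homotopyCofiberConnecting (hij : c.Rel i j) :
    (homotopyCofiber φ).homologyπ i ≫ homotopyCofiberConnecting φ hij =
      K.liftCycles ((homotopyCofiber φ).iCycles i ≫ homotopyCofiber.fstX φ i j hij) _ rfl
        ((comp_homotopyCofiber_d_eq_zero_iff φ hij _).1 (iCycles_d _ _ _)).1 ≫ K.homologyπ j :=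
  ((homotopyCofiber φ).homologyIsCokernel (c.prev i) i rfl).fac _ WalkingParallelPair.one

lemma liftCycles_homologyπ_homotopyCofiberConnecting (hij : c.Rel i j) {A : C}
    (x : A ⟶ (homotopyCofiber φ).X i) (hx : x ≫ (homotopyCofiber φ).d i j = 0) :
    ((homotopyCofiber φ).liftCycles x j (c.next_eq' hij) hx ≫ (homotopyCofiber φ).homologyπ i) ≫
      homotopyCofiberConnecting φ hij =
    K.liftCycles (x ≫ homotopyCofiber.fstX φ i j hij) _ rfl
      ((comp_homotopyCofiber_d_eq_zero_iff φ hij x).1 hx).1 ≫ K.homologyπ j := by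
  simp only [Category.assoc, homologyπ_homotopyCofiberConnecting, K.comp_liftCycles_assoc,
    liftCycles_i_assoc]

lemma homotopyCofiberConnecting_comp_homologyMap (hij : c.Rel i j) :
    homotopyCofiberConnecting φ hij ≫ homologyMap φ j = 0 := by
  have hφ := ((comp_homotopyCofiber_d_eq_zero_iff φ hij _).1
    ((homotopyCofiber φ).iCycles_d i j)).2
  rw [← cancel_epi ((homotopyCofiber φ).homologyπ i), comp_zero, ← Category.assoc,
    homologyπ_homotopyCofiberConnecting, Category.assoc, homologyπ_naturality, ← Category.assoc,
    liftCycles_comp_cyclesMap]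
  exact L.liftCycles_homologyπ_eq_zero_of_boundary _ _ _
    (-((homotopyCofiber φ).iCycles i ≫ homotopyCofiber.sndX φ i))
    (by rw [Preadditive.neg_comp]; exact eq_neg_of_add_eq_zero_left hφ)

lemma mono_homotopyCofiberConnecting {h : ι} (hhi : c.Rel h i) (hij : c.Rel i j)
    (hL : L.ExactAt i) : Mono (homotopyCofiberConnecting φ hij) := by
  refine Preadditive.mono_of_cancel_zero _ fun {A} γ hγ ↦ ?_
  obtain ⟨A₁, π₁, _, x, hx, hγx⟩ :=
    (homotopyCofiber φ).eq_liftCycles_homologyπ_up_to_refinements γ j (c.next_eq' hij)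
  have hfst := liftCycles_homologyπ_homotopyCofiberConnecting φ hij x hx
  rw [← hγx, Category.assoc, hγ, comp_zero, eq_comm,
    K.liftCycles_comp_homologyπ_eq_zero_iff_up_to_refinements i j _ (c.prev_eq' hij) rfl] at hfst
  obtain ⟨A₂, π₂, _, y, hy⟩ := hfst
  have hcycle : (π₂ ≫ x ≫ homotopyCofiber.sndX φ i + y ≫ φ.f i) ≫ L.d i j = 0 := by
    have hx₀ := π₂ ≫= ((comp_homotopyCofiber_d_eq_zero_iff φ hij x).1 hx).2
    simp only [Preadditive.comp_add, Category.assoc, reassoc_of% hy, comp_zero] at hx₀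
    simpa [add_comm] using hx₀
  obtain ⟨A₃, π₃, _, z, hz⟩ := (L.exactAt_iff_exact_up_to_refinements h i j (c.prev_eq' hhi)
    (c.next_eq' hij)).1 hL _ hcycle
  rw [← cancel_epi π₁, comp_zero, hγx,
    liftCycles_comp_homologyπ_eq_zero_iff_up_to_refinements _ h i j (c.prev_eq' hhi)]
  refine ⟨A₃, π₃ ≫ π₂, inferInstance,
    z ≫ homotopyCofiber.inrX φ h - π₃ ≫ y ≫ homotopyCofiber.inlX φ i h hhi,
    homotopyCofiber.ext_to_X φ i j hij ?_ ?_⟩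
  · simp [homotopyCofiber.d_fstX φ h i j hhi hij, hy]
  · simp [homotopyCofiber.d_sndX φ h i hhi, ← hz]

lemma homotopyCofiberConnecting_homologyMap_exact (hij : c.Rel i j) :
    (ShortComplex.mk _ _ (homotopyCofiberConnecting_comp_homologyMap φ hij)).Exact := by
  rw [ShortComplex.exact_iff_exact_up_to_refinements]
  intro A γ hγ
  obtain ⟨A₁, π₁, _, y, hy, hγy⟩ := K.eq_liftCycles_homologyπ_up_to_refinements γ _ rfl
  have hφy : L.liftCycles (y ≫ φ.f j) _ rfl (by simp [reassoc_of% hy]) ≫ L.homologyπ j = 0 := by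
    simpa [reassoc_of% hγy] using π₁ ≫= hγ
  obtain ⟨A₂, π₂, _, z, hz⟩ := (L.liftCycles_comp_homologyπ_eq_zero_iff_up_to_refinements i j _
    (c.prev_eq' hij) rfl _ _).1 hφy
  let x : A₂ ⟶ (homotopyCofiber φ).X i :=
    π₂ ≫ y ≫ homotopyCofiber.inlX φ j i hij - z ≫ homotopyCofiber.inrX φ i
  have hx_fst : x ≫ homotopyCofiber.fstX φ i j hij = π₂ ≫ y := by simp [x]
  have hx_snd : x ≫ homotopyCofiber.sndX φ i = -z := by simp [x]
  have hx : x ≫ (homotopyCofiber φ).d i j = 0 :=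
    (comp_homotopyCofiber_d_eq_zero_iff φ hij x).2
      ⟨by simp [hx_fst, hy], by simp [hx_fst, hx_snd, hz]⟩
  refine ⟨A₂, π₂ ≫ π₁, inferInstance,
    (homotopyCofiber φ).liftCycles x j (c.next_eq' hij) hx ≫ (homotopyCofiber φ).homologyπ i, ?_⟩
  dsimp only
  rw [liftCycles_homologyπ_homotopyCofiberConnecting]
  simp only [hx_fst, Category.assoc, hγy, K.comp_liftCycles_assoc]

lemma nonempty_homotopyCofiber_homology_iso_kernel {h : ι} (hhi : c.Rel h i) (hij : c.Rel i j)
    (hL : L.ExactAt i) :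
    Nonempty ((homotopyCofiber φ).homology i ≅ kernel (homologyMap φ j)) :=
  have := mono_homotopyCofiberConnecting φ hhi hij hL
  ⟨IsLimit.conePointUniqueUpToIso
    (homotopyCofiberConnecting_homologyMap_exact φ hij).fIsKernel (limit.isLimit _)⟩

end Cone

section ConeResolution
open Limits HomologicalComplex

variable {C : Type*} [Category* C] [Abelian C]

/-- The augmentation `P₀ ⟶ Z` of a projective resolution `P` of `Z`. Its target is `Z` itself
rather than the degree-zero term of the single complex on `Z`, to which it is only
definitionally equal. -/
def augmentation {Z : C} (P : ProjectiveResolution Z) : P.complex.X 0 ⟶ Z := P.π.f 0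

instance {Z : C} (P : ProjectiveResolution Z) : Epi (augmentation P) :=
  inferInstanceAs (Epi (P.π.f 0))

@[simp]
lemma d_comp_augmentation {Z : C} (P : ProjectiveResolution Z) :
    P.complex.d 1 0 ≫ augmentation P = 0 :=
  P.complex_d_comp_π_f_zero

lemma exact_augmentation {Z : C} (P : ProjectiveResolution Z) :
    (ShortComplex.mk _ _ (d_comp_augmentation P)).Exact :=
  P.exact₀

lemma quasiIsoAt_toSingle₀Equiv_symm_zero {K : ChainComplex C ℕ} {Z : C} {ε : K.X 0 ⟶ Z} [Epi ε]
    (hε : K.d 1 0 ≫ ε = 0) (hK : (ShortComplex.mk _ _ hε).Exact) :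
    QuasiIsoAt ((ChainComplex.toSingle₀Equiv K Z).symm ⟨ε, hε⟩) 0 := by
  rw [ChainComplex.quasiIsoAt₀_iff,
    ShortComplex.quasiIso_iff_of_zeros' _ (K.shape _ _ (by simp)) rfl rfl]
  refine (ShortComplex.exact_and_epi_g_iff_of_iso ?_).2 ⟨hK, ‹Epi ε›⟩
  refine ShortComplex.isoMk (Iso.refl _) (Iso.refl _) (Iso.refl _) ?_ ?_
  · exact (Category.id_comp _).trans (Category.comp_id _).symm
  · exact (Category.id_comp _).trans <|
      (ChainComplex.toSingle₀Equiv_symm_apply_f_zero ε hε).symm.trans (Category.comp_id _).symm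

variable {S : ShortComplex C} {P : ProjectiveResolution S.X₁} {Q : ProjectiveResolution S.X₂}
  {φ : P.complex ⟶ Q.complex}

lemma mono_homologyMap_of_mono [Mono S.f]
    (hφ : φ.f 0 ≫ augmentation Q = augmentation P ≫ S.f) (r : ℕ) :
    Mono (homologyMap φ r) := by
  rw [mono_homologyMap_iff_up_to_refinements φ (r + 1) r _ (by simp) rfl]
  intro A x hx y hy
  obtain _ | r := r
  · have hxP : x ≫ augmentation P = 0 := by
      rw [← cancel_mono S.f, zero_comp, Category.assoc, ← hφ, reassoc_of% hy,
        d_comp_augmentation, comp_zero]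
    exact (exact_augmentation P).exact_up_to_refinements x hxP
  · rw [ChainComplex.next_nat_succ] at hx
    exact (P.exact_succ r).exact_up_to_refinements x hx

lemma homotopyCofiber_exactAt_succ [Mono S.f]
    (hφ : φ.f 0 ≫ augmentation Q = augmentation P ≫ S.f) (r : ℕ) :
    (homotopyCofiber φ).ExactAt (r + 1) := by
  have := mono_homologyMap_of_mono hφ r
  obtain ⟨e⟩ := nonempty_homotopyCofiber_homology_iso_kernel φ (h := r + 2) (i := r + 1) (j := r)
    rfl rfl (Q.complex_exactAt_succ r)
  rw [exactAt_iff_isZero_homology]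
  exact (isZero_kernel_of_mono _).of_iso e

variable (φ) in
/-- The augmentation of the mapping cone of a lift `φ` of `S.f` to projective resolutions,
induced by `Q₀ ⟶ S.X₂ ⟶ S.X₃`. -/
noncomputable def coneAugmentation : (homotopyCofiber φ).X 0 ⟶ S.X₃ :=
  homotopyCofiber.sndX φ 0 ≫ augmentation Q ≫ S.g

lemma homotopyCofiber_d_comp_coneAugmentation
    (hφ : φ.f 0 ≫ augmentation Q = augmentation P ≫ S.f) :
    (homotopyCofiber φ).d 1 0 ≫ coneAugmentation φ = 0 := by
  rw [coneAugmentation, homotopyCofiber_d, homotopyCofiber.d_sndX_assoc φ 1 0 rfl]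
  simp [reassoc_of% hφ, reassoc_of% (d_comp_augmentation Q)]

lemma epi_coneAugmentation (φ : P.complex ⟶ Q.complex) [Epi S.g] : Epi (coneAugmentation φ) := by
  have : Epi (homotopyCofiber.sndX φ 0) := epi_of_epi_fac (homotopyCofiber.inrX_sndX φ 0)
  exact inferInstanceAs (Epi (homotopyCofiber.sndX φ 0 ≫ augmentation Q ≫ S.g))

lemma exact_coneAugmentation (hS : S.Exact)
    (hφ : φ.f 0 ≫ augmentation Q = augmentation P ≫ S.f) :
    (ShortComplex.mk _ _ (homotopyCofiber_d_comp_coneAugmentation hφ)).Exact := by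
  rw [ShortComplex.exact_iff_exact_up_to_refinements]
  intro A (x : A ⟶ homotopyCofiber.X φ 0) hx
  obtain ⟨A₁, π₁, _, y, hy⟩ := hS.exact_up_to_refinements
    (x ≫ homotopyCofiber.sndX φ 0 ≫ augmentation Q) (by simpa [coneAugmentation] using hx)
  obtain ⟨A₂, π₂, _, p, hp⟩ := surjective_up_to_refinements_of_epi (augmentation P) y
  have hcycle :
      (π₂ ≫ π₁ ≫ x ≫ homotopyCofiber.sndX φ 0 - p ≫ φ.f 0) ≫ augmentation Q = 0 := by
    simp [hφ, hy, reassoc_of% hp]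
  obtain ⟨A₃, π₃, _, q, hq⟩ := (exact_augmentation Q).exact_up_to_refinements _ hcycle
  refine ⟨A₃, π₃ ≫ π₂ ≫ π₁, inferInstance,
    π₃ ≫ p ≫ homotopyCofiber.inlX φ 0 1 rfl + q ≫ homotopyCofiber.inrX φ 1,
    homotopyCofiber.ext_to_X' φ 0 (by simp) ?_⟩
  simp [homotopyCofiber.d_sndX φ 1 0 rfl, ← hq, homotopyCofiber.inlX_fstX_assoc φ 0 1 rfl,
    homotopyCofiber.inlX_sndX_assoc φ 0 1 rfl]

/-- The mapping cone of a lift of `S.f` to projective resolutions of `S.X₁` and `S.X₂`, as a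
projective resolution of `S.X₃`, for a short exact sequence `S`. -/
noncomputable def coneResolution (hS : S.ShortExact)
    (hφ : φ.f 0 ≫ augmentation Q = augmentation P ≫ S.f) : ProjectiveResolution S.X₃ where
  complex := homotopyCofiber φ
  projective r := by
    obtain _ | r := r
    · exact Projective.of_iso (homotopyCofiber.XIso φ 0 (by simp)).symm (Q.projective 0)
    · exact Projective.of_iso (homotopyCofiber.XIsoBiprod φ (r + 1) r rfl).symm inferInstance
  π := (ChainComplex.toSingle₀Equiv _ _).symm
    ⟨coneAugmentation φ, homotopyCofiber_d_comp_coneAugmentation hφ⟩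
  quasiIso := ⟨fun r ↦ by
    have := hS.mono_f
    have := hS.epi_g
    obtain _ | r := r
    · have := epi_coneAugmentation φ
      exact quasiIsoAt_toSingle₀Equiv_symm_zero _ (exact_coneAugmentation hS.exact hφ)
    · rw [quasiIsoAt_iff_exactAt' _ _ (ChainComplex.exactAt_succ_single_obj _ _)]
      exact homotopyCofiber_exactAt_succ hφ r⟩

end ConeResolution

section LeftDerived
open Limits HomologicalComplex

variable {C D : Type*} [Category* C] [Category* D] [Abelian C] [Abelian D]
  [HasProjectiveResolutions C] (F : C ⥤ D) [F.Additive]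

lemma nonempty_leftDerived_iso_kernel {S : ShortComplex C} (hS : S.ShortExact) {r : ℕ}
    (h : IsZero ((F.leftDerived (r + 1)).obj S.X₂)) :
    Nonempty ((F.leftDerived (r + 1)).obj S.X₃ ≅ kernel ((F.leftDerived r).map S.f)) := by
  let P := projectiveResolution S.X₁
  let Q := projectiveResolution S.X₂
  let φ := ProjectiveResolution.lift S.f P Q
  have hφ : φ.f 0 ≫ augmentation Q = augmentation P ≫ S.f :=
    ProjectiveResolution.lift_commutes_zero S.f P Q
  let Fφ := (F.mapHomologicalComplex (ComplexShape.down ℕ)).map φ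
  have hQ : ((F.mapHomologicalComplex _).obj Q.complex).ExactAt (r + 1) :=
    (exactAt_iff_isZero_homology _ _).2 (h.of_iso (Q.isoLeftDerivedObj F (r + 1)).symm)
  obtain ⟨e⟩ := nonempty_homotopyCofiber_homology_iso_kernel Fφ (h := r + 2) (i := r + 1)
    (j := r) rfl rfl hQ
  have hnat := ProjectiveResolution.isoLeftDerivedObj_hom_naturality S.f P Q φ hφ F r
  exact ⟨(coneResolution hS hφ).isoLeftDerivedObj F (r + 1) ≪≫
    (homologyFunctor _ _ _).mapIso (homotopyCofiber.mapHomologicalComplexObjIso φ F) ≪≫ e ≪≫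
    (kernel.mapIso _ _ (P.isoLeftDerivedObj F r) (Q.isoLeftDerivedObj F r) hnat).symm⟩

lemma leftDerived_map_smul_id {R : Type*} [CommRing R] [Linear R C] [Linear R D] [F.Linear R]
    (n : ℕ) (x : R) (A : C) :
    (F.leftDerived n).map (x • 𝟙 A) = x • 𝟙 ((F.leftDerived n).obj A) := by
  let P := projectiveResolution A
  have hlift : (x • 𝟙 P.complex).f 0 ≫ augmentation P = augmentation P ≫ (x • 𝟙 A) := by simp
  have hmap : (F.mapHomologicalComplex (ComplexShape.down ℕ) ⋙ homologyFunctor D _ n).map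
      (x • 𝟙 P.complex) = x • 𝟙 _ := by
    rw [Functor.comp_map, Functor.map_smul, CategoryTheory.Functor.map_id]
    exact (ShortComplex.homologyMap_smul _ x).trans (congrArg _ (homologyMap_id _ _))
  rw [← cancel_mono (P.isoLeftDerivedObj F n).hom,
    ProjectiveResolution.isoLeftDerivedObj_hom_naturality (x • 𝟙 A) P P _ hlift F n, hmap]
  simp

end LeftDerived

section RegularSequence
open Limits RingTheory.Sequence

universe u

lemma map_torsionBySet_of_injective {R M N : Type*} [CommRing R] [AddCommGroup M] [Module R M]
    [AddCommGroup N] [Module R N] {f : M →ₗ[R] N} (hf : Function.Injective f) (s : Set R) :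
    (Submodule.torsionBySet R M s).map f = LinearMap.range f ⊓ Submodule.torsionBySet R N s := by
  ext y
  simp only [Submodule.mem_map, Submodule.mem_inf, LinearMap.mem_range,
    Submodule.mem_torsionBySet_iff]
  constructor
  · rintro ⟨x, hx, rfl⟩
    exact ⟨⟨x, rfl⟩, fun a ↦ by rw [← map_smul, hx a, map_zero]⟩
  · rintro ⟨⟨x, rfl⟩, hx⟩
    exact ⟨x, fun a ↦ hf (by rw [map_smul, hx a, map_zero]), rfl⟩

variable {R : Type u} [CommRing R] (F : ModuleCat.{u} R ⥤ ModuleCat.{u} R) [F.Additive]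

lemma isZero_leftDerived_quotSMulTop {A : ModuleCat.{u} R} {x : R} (hx : IsSMulRegular A x) {r : ℕ}
    (hr : IsZero ((F.leftDerived r).obj A)) (hr' : IsZero ((F.leftDerived (r + 1)).obj A)) :
    IsZero ((F.leftDerived (r + 1)).obj (.of R (QuotSMulTop x A))) := by
  obtain ⟨e⟩ := nonempty_leftDerived_iso_kernel F (S := A.smulShortComplex x)
    hx.smulShortComplex_shortExact hr'
  exact (hr.of_mono (kernel.ι _)).of_iso e

variable [F.Linear R]

lemma exists_leftDerived_quotSMulTop_range_eq_torsionBy {A : ModuleCat.{u} R} {x : R}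
    (hx : IsSMulRegular A x) {r : ℕ} (hr : IsZero ((F.leftDerived (r + 1)).obj A)) :
    ∃ f : (F.leftDerived (r + 1)).obj (.of R (QuotSMulTop x A)) →ₗ[R] (F.leftDerived r).obj A,
      Function.Injective f ∧
        LinearMap.range f = Submodule.torsionBy R ((F.leftDerived r).obj A) x := by
  have hkernel := nonempty_leftDerived_iso_kernel F (S := A.smulShortComplex x)
    hx.smulShortComplex_shortExact hr
  rw [ModuleCat.smulShortComplex_f_eq_smul_id] at hkernel
  obtain ⟨e⟩ : Nonempty ((F.leftDerived (r + 1)).obj (.of R (QuotSMulTop x A)) ≅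
    kernel (x • 𝟙 ((F.leftDerived r).obj A))) := leftDerived_map_smul_id F r x A ▸ hkernel
  let e' := (e ≪≫ ModuleCat.kernelIsoKer _).toLinearEquiv
  refine ⟨(LinearMap.ker _).subtype ∘ₗ e'.toLinearMap,
    (Submodule.subtype_injective _).comp e'.injective, ?_⟩
  rw [LinearEquiv.range_comp, Submodule.range_subtype]
  rfl

lemma exists_leftDerived_quotient_ofList_range_eq_torsionBySet (rs : List R) {A : ModuleCat.{u} R}
    (hrs : IsWeaklyRegular A rs) {s : ℕ} (hA : ∀ r > s, IsZero ((F.leftDerived r).obj A)) :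
    ∃ f : (F.leftDerived (s + rs.length)).obj (.of R (A ⧸ (Ideal.ofList rs • ⊤ : Submodule R A)))
        →ₗ[R] (F.leftDerived s).obj A,
      Function.Injective f ∧
        LinearMap.range f = Submodule.torsionBySet R ((F.leftDerived s).obj A) {x | x ∈ rs} := by
  induction rs generalizing A s with
  | nil =>
    let e := ((F.leftDerived s).mapIso (Submodule.quotEquivOfEqBot
      (Ideal.ofList ([] : List R) • ⊤ : Submodule R A) (by simp)).toModuleIso).toLinearEquiv
    refine ⟨e.toLinearMap, e.injective, ?_⟩
    rw [LinearEquiv.range, eq_comm, eq_top_iff]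
    exact fun y _ ↦ (Submodule.mem_torsionBySet_iff _ _).2 fun a ↦ absurd a.2 List.not_mem_nil
  | cons x rs ih =>
    obtain ⟨hx, hrs'⟩ := (isWeaklyRegular_cons_iff A x rs).1 hrs
    obtain ⟨f, hf, hf_range⟩ :=
      exists_leftDerived_quotSMulTop_range_eq_torsionBy F hx (hA (s + 1) (by lia))
    obtain ⟨g, hg, hg_range⟩ := ih (A := .of R (QuotSMulTop x A)) (s := s + 1) hrs' fun r hr ↦ by
      obtain ⟨r, rfl⟩ := Nat.exists_eq_succ_of_ne_zero (Nat.ne_zero_of_lt hr)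
      exact isZero_leftDerived_quotSMulTop F hx (hA _ (by lia)) (hA _ (by lia))
    let e := ((F.leftDerived (s + 1 + rs.length)).mapIso
      (Submodule.quotOfListConsSMulTopEquivQuotSMulTopInner A x rs).toModuleIso).toLinearEquiv
    rw [show s + (x :: rs).length = s + 1 + rs.length by simp only [List.length_cons]; lia]
    refine ⟨f ∘ₗ g ∘ₗ e.toLinearMap, hf.comp (hg.comp e.injective), ?_⟩
    rw [LinearMap.range_comp, LinearEquiv.range_comp, hg_range, map_torsionBySet_of_injective hf,
      hf_range]
    ext y
    simp only [Submodule.mem_inf, Submodule.mem_torsionBy_iff, Submodule.mem_torsionBySet_iff,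
      Subtype.forall, Set.mem_ofPred_eq, List.forall_mem_cons]

lemma isSMulRegular_quotient_span_X_image {σ k : Type*} [CommRing k] {s : Set σ} {j : σ}
    (hj : j ∉ s) :
    IsSMulRegular (MvPolynomial σ k ⧸ Ideal.span (X '' s : Set (MvPolynomial σ k)))
      (X j : MvPolynomial σ k) := by
  rw [isSMulRegular_iff_right_eq_zero_of_smul]
  intro q hq
  obtain ⟨p, rfl⟩ := Ideal.Quotient.mk_surjective q
  rw [← Ideal.Quotient.mk_eq_mk, ← Submodule.Quotient.mk_smul, Ideal.Quotient.mk_eq_mk,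
    Ideal.Quotient.eq_zero_iff_mem, mem_ideal_span_X_image, smul_eq_mul] at hq
  rw [Ideal.Quotient.eq_zero_iff_mem, mem_ideal_span_X_image]
  intro m hm
  obtain ⟨i, hi, hmi⟩ := hq (Finsupp.single j 1 + m) (by
    rwa [mem_support_iff, coeff_X_mul, ← mem_support_iff])
  refine ⟨i, hi, ?_⟩
  rwa [Finsupp.add_apply, Finsupp.single_eq_of_ne (ne_of_mem_of_not_mem hi hj), zero_add] at hmi

lemma isWeaklyRegular_map_X {σ k : Type*} [CommRing k] {l : List σ} (hl : l.Nodup) :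
    IsWeaklyRegular (MvPolynomial σ k) (l.map (X : σ → MvPolynomial σ k)) := by
  refine ⟨fun i hi ↦ ?_⟩
  have hspan : Ideal.ofList ((l.map (X : σ → MvPolynomial σ k)).take i) •
      (⊤ : Ideal (MvPolynomial σ k)) = Ideal.span (X '' {j | j ∈ l.take i}) := by
    rw [smul_eq_mul, Ideal.mul_top, Ideal.ofList]
    congr 1
    ext
    simp [← List.map_take]
  rw [List.getElem_map, hspan]
  rw [List.length_map] at hi
  refine isSMulRegular_quotient_span_X_image fun h ↦ ?_
  obtain ⟨j, hj, hji⟩ := List.mem_take_iff_getElem.1 h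
  have := (hl.getElem_inj_iff).1 hji
  lia

lemma nonempty_tor_quotient_ofList_linearEquiv_torsionBySet (N : ModuleCat.{u} R) {rs : List R}
    (hrs : IsWeaklyRegular R rs) :
    Nonempty (((Tor (ModuleCat R) rs.length).obj N).obj (.of R (R ⧸ Ideal.ofList rs)) ≃ₗ[R]
      Submodule.torsionBySet R N {x | x ∈ rs}) := by
  let F := (MonoidalCategory.tensoringLeft (ModuleCat R)).obj N
  have hf := exists_leftDerived_quotient_ofList_range_eq_torsionBySet F rs
    (A := .of R R) hrs (s := 0) fun r hr ↦ by
      obtain ⟨r, rfl⟩ := Nat.exists_eq_succ_of_ne_zero hr.ne'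
      exact F.isZero_leftDerived_obj_projective_succ r _
  rw [zero_add, show Ideal.ofList rs • (⊤ : Ideal R) = Ideal.ofList rs from Ideal.mul_top _] at hf
  obtain ⟨f, hf, hf_range⟩ := hf
  let e := (F.leftDerivedZeroIsoSelf.app (.of R R) ≪≫ MonoidalCategory.rightUnitor N).toLinearEquiv
  have hef_range : LinearMap.range (e.toLinearMap ∘ₗ f) =
      Submodule.torsionBySet R N {x | x ∈ rs} := by
    rw [LinearMap.range_comp, hf_range, map_torsionBySet_of_injective e.injective,
      LinearEquiv.range, top_inf_eq]
  have hef : Function.Injective (e.toLinearMap ∘ₗ f) := e.injective.comp hf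
  exact ⟨(LinearEquiv.ofInjective _ hef).trans (LinearEquiv.ofEq _ _ hef_range)⟩

end RegularSequence

section Socle

/-- The socle of `k[x_i : i ∈ σ] ⧸ M`, i.e. the elements annihilated by all the variables,
as a `k`-submodule. -/
noncomputable def quotientSocle {σ k : Type*} [CommRing k] (M : Ideal (MvPolynomial σ k)) :
    Submodule k (MvPolynomial σ k ⧸ M) :=
  (Submodule.torsionBySet (MvPolynomial σ k) _ (Set.range X)).restrictScalars k

lemma mk_mem_quotientSocle {σ k : Type*} [CommRing k] {M : Ideal (MvPolynomial σ k)}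
    {p : MvPolynomial σ k} : Ideal.Quotient.mk M p ∈ quotientSocle M ↔ ∀ i, X i * p ∈ M := by
  simp only [quotientSocle, Submodule.restrictScalars_mem, Submodule.mem_torsionBySet_iff,
    Set.forall_subtype_range_iff, ← Ideal.Quotient.eq_zero_iff_mem, map_mul]
  rfl

variable {k : Type} [Field k] {n : ℕ}

lemma betti_eq_finrank_quotientSocle (M : Ideal (MvPolynomial (Fin n) k)) :
    betti k M n = Module.finrank k (quotientSocle M) := by
  let S := MvPolynomial (Fin n) k
  let vars : List S := (List.finRange n).map X
  have hvars : {x | x ∈ vars} = Set.range (X : Fin n → S) := by ext; simp [vars]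
  have htor := nonempty_tor_quotient_ofList_linearEquiv_torsionBySet (.of S (S ⧸ M))
    (isWeaklyRegular_map_X (k := k) (List.nodup_finRange n))
  rw [List.length_map, List.length_finRange, Ideal.ofList, hvars] at htor
  obtain ⟨e⟩ := htor
  exact LinearEquiv.finrank_eq
    { e.toAddEquiv with
      map_smul' := fun c z ↦ (map_smul e (algebraMap k S c) z).trans
        (Subtype.ext (algebraMap_smul S c (e z : S ⧸ M))) }

lemma mem_monIdeal_iff {A : Set (Fin n → ℕ)} {p : MvPolynomial (Fin n) k} :
    p ∈ monIdeal k A ↔ ∀ a ∈ p.support, ∃ g ∈ A, g ≤ ⇑a := by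
  have hspan : expMon k '' A =
      (fun a ↦ monomial a (1 : k)) '' (Finsupp.equivFunOnFinite.symm '' A) := by
    rw [Set.image_image]
    rfl
  rw [monIdeal, hspan, mem_ideal_span_monomial_image]
  simp only [Set.mem_image, exists_exists_and_eq_and]
  rfl

lemma expMon_mem_monIdeal_iff {A : Set (Fin n → ℕ)} {u : Fin n → ℕ} :
    expMon k u ∈ monIdeal k A ↔ ∃ g ∈ A, g ≤ u := by
  classical
  simp [mem_monIdeal_iff, expMon, support_monomial]

lemma X_mul_expMon (i : Fin n) (u : Fin n → ℕ) :
    X i * expMon k u = expMon k (u + Pi.single i 1) := by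
  have hadd : Finsupp.single i 1 + Finsupp.equivFunOnFinite.symm u =
      Finsupp.equivFunOnFinite.symm (u + Pi.single i 1) := by
    ext j
    simp [add_comm, Finsupp.single_eq_pi_single]
  rw [expMon, expMon, X, monomial_mul, one_mul, hadd]

/-- The exponent vectors `u` for which `x^u` lies outside the monomial ideal generated by the
`x^g` with `g ∈ A`, while `x_i x^u` lies inside it for every `i`. -/
def socleExponents (A : Set (Fin n → ℕ)) : Set (Fin n → ℕ) :=
  {u | (∀ g ∈ A, ¬g ≤ u) ∧ ∀ i, ∃ g ∈ A, g ≤ u + Pi.single i 1}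

lemma mk_expMon_mem_quotientSocle_iff {A : Set (Fin n → ℕ)} {u : Fin n → ℕ} :
    Ideal.Quotient.mk (monIdeal k A) (expMon k u) ∈ quotientSocle (monIdeal k A) ↔
      ∀ i, ∃ g ∈ A, g ≤ u + Pi.single i 1 := by
  simp only [mk_mem_quotientSocle, X_mul_expMon, expMon_mem_monIdeal_iff]

variable (k) in
lemma linearIndependent_expMon :
    LinearIndependent k (expMon k : (Fin n → ℕ) → MvPolynomial (Fin n) k) := by
  have h := (basisMonomials (Fin n) k).linearIndependent.comp _
    Finsupp.equivFunOnFinite.symm.injective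
  rw [coe_basisMonomials] at h
  exact h

lemma linearIndependent_mk_expMon {A T : Set (Fin n → ℕ)} (hT : ∀ u ∈ T, ∀ g ∈ A, ¬g ≤ u) :
    LinearIndependent k fun u : T ↦ Ideal.Quotient.mk (monIdeal k A) (expMon k u) := by
  refine ((linearIndependent_expMon k).comp _ Subtype.val_injective).map
    (f := (Ideal.Quotient.mkₐ k (monIdeal k A)).toLinearMap) ?_
  rw [Submodule.disjoint_def]
  intro p hpT hpA
  have hsupport : p ∈ restrictSupport k {a : Fin n →₀ ℕ | ⇑a ∈ T} := by
    refine Submodule.span_le.2 ?_ hpT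
    rintro _ ⟨u, rfl⟩
    exact (monomial_mem_restrictSupport k).2 (Or.inl u.2)
  have hp : p ∈ monIdeal k A := Ideal.Quotient.eq_zero_iff_mem.1 hpA
  rw [← support_eq_empty, Finset.eq_empty_iff_forall_notMem]
  intro a ha
  obtain ⟨g, hg, hga⟩ := mem_monIdeal_iff.1 hp a ha
  exact hT _ ((mem_restrictSupport_iff k).1 hsupport ha) g hg hga

lemma exists_le_add_single_of_mk_mem_quotientSocle {A : Set (Fin n → ℕ)}
    {p : MvPolynomial (Fin n) k}
    (hp : Ideal.Quotient.mk (monIdeal k A) p ∈ quotientSocle (monIdeal k A))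
    {a : Fin n →₀ ℕ} (ha : a ∈ p.support) (i : Fin n) : ∃ g ∈ A, g ≤ ⇑a + Pi.single i 1 := by
  obtain ⟨g, hg, hga⟩ := mem_monIdeal_iff.1 (mk_mem_quotientSocle.1 hp i)
    (Finsupp.single i 1 + a) (by rwa [mem_support_iff, coeff_X_mul, ← mem_support_iff])
  rw [Finsupp.coe_add, Finsupp.single_eq_pi_single, add_comm] at hga
  exact ⟨g, hg, hga⟩

lemma span_mk_expMon_eq_quotientSocle (A : Set (Fin n → ℕ)) :
    Submodule.span k (Set.range fun u : socleExponents A ↦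
      Ideal.Quotient.mk (monIdeal k A) (expMon k u)) = quotientSocle (monIdeal k A) := by
  refine le_antisymm (Submodule.span_le.2 ?_) fun q hq ↦ ?_
  · rintro _ ⟨u, rfl⟩
    exact mk_expMon_mem_quotientSocle_iff.2 u.2.2
  obtain ⟨p, rfl⟩ := Ideal.Quotient.mk_surjective q
  have hcover := fun a ↦ exists_le_add_single_of_mk_mem_quotientSocle hq (a := a)
  rw [← p.support_sum_monomial_coeff, map_sum]
  refine Submodule.sum_mem _ fun a ha ↦ ?_
  have hmonomial : monomial a (p.coeff a) = p.coeff a • expMon k ⇑a := by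
    rw [expMon, Finsupp.equivFunOnFinite_symm_coe, smul_monomial, smul_eq_mul, mul_one]
  rw [hmonomial]
  change Ideal.Quotient.mkₐ k _ _ ∈ _
  rw [map_smul]
  refine Submodule.smul_mem _ _ ?_
  by_cases haM : ∃ g ∈ A, g ≤ ⇑a
  · rw [Ideal.Quotient.mkₐ_eq_mk, Ideal.Quotient.eq_zero_iff_mem.2 (expMon_mem_monIdeal_iff.2 haM)]
    exact zero_mem _
  · push Not at haM
    exact Submodule.subset_span ⟨⟨⇑a, haM, hcover a ha⟩, rfl⟩

lemma betti_monIdeal_eq_ncard_socleExponents (A : Set (Fin n → ℕ)) :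
    betti k (monIdeal k A) n = (socleExponents A).ncard := by
  have hindep := linearIndependent_mk_expMon (k := k) fun u (hu : u ∈ socleExponents A) ↦ hu.1
  rw [betti_eq_finrank_quotientSocle, ← span_mk_expMon_eq_quotientSocle,
    Module.finrank_eq_nat_card_basis (Module.Basis.span hindep), Nat.card_coe_set_eq]

end Socle

section Dominance

variable {n : ℕ}

/-- A family of monomials indexed by the variables, whose `i`-th member has a strictly larger
exponent of `x_i` than all the others. In `n` variables, such families enumerate the dominant sets
of `n` monomials. -/
def IsDominantFamily {ι : Type*} (m : ι → ι → ℕ) : Prop :=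
  ∀ ⦃i j⦄, j ≠ i → m j i < m i i

lemma IsDominantFamily.injective {ι : Type*} {m : ι → ι → ℕ} (hm : IsDominantFamily m) :
    Function.Injective m := by
  intro i j hij
  by_contra hne
  exact (hm hne).ne (congrFun hij j)

lemma IsDominantFamily.le_diag {ι : Type*} {m : ι → ι → ℕ} (hm : IsDominantFamily m) (i : ι) :
    m i ≤ fun j ↦ m j j := by
  intro j
  obtain rfl | hne := eq_or_ne i j
  exacts [le_rfl, (hm hne).le]

lemma IsDominantFamily.sup_image {m : Fin n → Fin n → ℕ} (hm : IsDominantFamily m) :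
    (Finset.univ.image m).sup id = fun i ↦ m i i := by
  rw [Finset.sup_image]
  refine le_antisymm (Finset.sup_le fun i _ ↦ hm.le_diag i) fun i ↦ ?_
  exact Finset.le_sup (f := m) (Finset.mem_univ i) i

lemma dominantSet_and_card_eq_iff {D : Finset (Fin n → ℕ)} :
    DominantSet D ∧ D.card = n ↔ ∃ m, IsDominantFamily m ∧ Finset.univ.image m = D := by
  constructor
  · rintro ⟨hD, hcard⟩
    choose f hf using fun a : D ↦ hD a a.2
    have hinj : Function.Injective f := by
      intro a b hab
      by_contra hne
      have hba := hf a b b.2 fun h ↦ hne (Subtype.ext h.symm)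
      have hab' := hf b a a.2 fun h ↦ hne (Subtype.ext h)
      rw [hab] at hba
      exact hba.asymm hab'
    have hbij : Function.Bijective f :=
      (Fintype.bijective_iff_injective_and_card f).2 ⟨hinj, by simp [hcard]⟩
    let e := Equiv.ofBijective f hbij
    have he (i : Fin n) : f (e.symm i) = i := e.apply_symm_apply i
    refine ⟨fun i ↦ e.symm i, fun i j hji ↦ ?_, ?_⟩
    · have hne : (e.symm j : Fin n → ℕ) ≠ e.symm i :=
        fun h ↦ hji (e.symm.injective (Subtype.ext h))
      simpa only [he] using hf (e.symm i) (e.symm j) (e.symm j).2 hne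
    · ext a
      simp only [Finset.mem_image, Finset.mem_univ, true_and]
      exact ⟨by rintro ⟨i, rfl⟩; exact (e.symm i).2, fun ha ↦ ⟨e ⟨a, ha⟩, by simp⟩⟩
  · rintro ⟨m, hm, rfl⟩
    refine ⟨?_, by rw [Finset.card_image_of_injective _ hm.injective, Finset.card_fin]⟩
    simp only [DominantSet, DominantIn, Finset.forall_mem_image]
    exact fun i _ ↦ ⟨i, fun j _ hne ↦ hm fun h ↦ hne (congrArg m h)⟩

lemma stronglyDivides_add_one_iff {g u : Fin n → ℕ} : StronglyDivides g (u + 1) ↔ g ≤ u := by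
  refine forall_congr' fun i ↦ ?_
  simp only [Pi.add_apply, Pi.one_apply]
  omega

lemma IsDominantFamily.diag_ne_zero {m : Fin n → Fin n → ℕ} (hm : IsDominantFamily m) {i : Fin n}
    (hi : ¬StronglyDivides (m i) fun j ↦ m j j) : m i i ≠ 0 := by
  refine fun h ↦ hi fun j hj ↦ ?_
  obtain rfl | hne := eq_or_ne i j
  exacts [absurd h hj, hm hne]

lemma IsDominantFamily.mem_socleExponents {A : Set (Fin n → ℕ)} {m : Fin n → Fin n → ℕ}
    {u : Fin n → ℕ} (hm : IsDominantFamily m) (hmA : ∀ i, m i ∈ A) (hu : ∀ i, m i i = u i + 1)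
    (hA : ∀ g ∈ A, ¬g ≤ u) : u ∈ socleExponents A := by
  refine ⟨hA, fun i ↦ ⟨m i, hmA i, fun j ↦ ?_⟩⟩
  obtain rfl | hne := eq_or_ne i j
  · simp [hu]
  · simpa [hne.symm, hu, Nat.lt_succ_iff] using hm hne

lemma exists_isDominantFamily_of_mem_socleExponents {A : Set (Fin n → ℕ)} {u : Fin n → ℕ}
    (hu : u ∈ socleExponents A) :
    ∃ m, IsDominantFamily m ∧ (∀ i, m i ∈ A) ∧ ∀ i, m i i = u i + 1 := by
  choose m hmA hm using hu.2
  have hoff {i j : Fin n} (hne : j ≠ i) : m i j ≤ u j := by simpa [hne] using hm i j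
  have hdiag (i : Fin n) : m i i = u i + 1 := by
    refine le_antisymm (by simpa using hm i i) <|
      Nat.succ_le_of_lt <| not_le.1 fun hle ↦ hu.1 (m i) (hmA i) fun j ↦ ?_
    obtain rfl | hne := eq_or_ne j i
    exacts [hle, hoff hne]
  exact ⟨m, fun i j hne ↦ by simpa [hdiag, Nat.lt_succ_iff] using hoff hne.symm, hmA, hdiag⟩

open Classical in
lemma coe_image_sup_eq_image_socleExponents (G : Finset (Fin n → ℕ)) :
    (((G.powerset.filter fun D ↦ DominantSet D ∧ D.card = n ∧
        ∀ g ∈ G, ¬StronglyDivides g (D.sup id)).image fun D ↦ D.sup id : Finset (Fin n → ℕ)) :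
      Set (Fin n → ℕ)) = (· + 1) '' socleExponents (G : Set (Fin n → ℕ)) := by
  ext l
  simp only [Finset.coe_image, Finset.coe_filter, Finset.mem_powerset, Set.mem_image,
    Set.mem_ofPred_eq]
  constructor
  · rintro ⟨D, ⟨hDG, hdom, hcard, hstrong⟩, rfl⟩
    obtain ⟨m, hm, rfl⟩ := dominantSet_and_card_eq_iff.1 ⟨hdom, hcard⟩
    have hmG (i : Fin n) : m i ∈ G := hDG (Finset.mem_image_of_mem m (Finset.mem_univ i))
    rw [hm.sup_image] at hstrong ⊢
    obtain ⟨u, hu⟩ : ∃ u : Fin n → ℕ, (fun i ↦ m i i) = u + 1 :=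
      ⟨fun i ↦ m i i - 1, funext fun i ↦
        (Nat.succ_pred_eq_of_ne_zero (hm.diag_ne_zero (hstrong _ (hmG i)))).symm⟩
    rw [hu] at hstrong ⊢
    exact ⟨u, hm.mem_socleExponents hmG (congrFun hu)
      fun g hg hle ↦ hstrong g hg (stronglyDivides_add_one_iff.2 hle), rfl⟩
  · rintro ⟨u, hu, rfl⟩
    obtain ⟨m, hm, hmG, hdiag⟩ := exists_isDominantFamily_of_mem_socleExponents hu
    have hsup : (Finset.univ.image m).sup id = u + 1 := hm.sup_image.trans (funext hdiag)
    obtain ⟨hdom, hcard⟩ := dominantSet_and_card_eq_iff.2 ⟨m, hm, rfl⟩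
    refine ⟨Finset.univ.image m, ⟨?_, hdom, hcard, fun g hg ↦ ?_⟩, hsup⟩
    · simpa [Finset.image_subset_iff] using hmG
    · rw [hsup, stronglyDivides_add_one_iff]
      exact hu.1 g hg

end Dominance

open Classical in
theorem bettiN_eq_card_lcms_general (n : ℕ) (k : Type) [Field k]
    (G : Finset (Fin n → ℕ)) :
    betti k (monIdeal k (G : Set (Fin n → ℕ))) n =
      ((G.powerset.filter fun D ↦ DominantSet D ∧ D.card = n ∧
          ∀ g ∈ G, ¬StronglyDivides g (D.sup id)).image fun D ↦ D.sup id).card := by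
  rw [betti_monIdeal_eq_ncard_socleExponents,
    ← Set.ncard_image_of_injective _ (add_left_injective (1 : Fin n → ℕ)),
    ← coe_image_sup_eq_image_socleExponents G, Set.ncard_coe_finset]

open Classical in
/-- `β_n(S/M)` equals the number of distinct monomials `lcm(D)`, where `D` ranges over the
dominant subsets of the minimal generating set `G` of cardinality `n` whose lcm is not
strongly divided by any element of `G`. -/
theorem bettiN_eq_card_lcms (n : ℕ) (k : Type) [Field k]
    (G : Finset (Fin n → ℕ)) (M : Ideal (MvPolynomial (Fin n) k))
    (hgen : M = monIdeal k ↑G)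
    (hmin : ∀ a ∈ G, ∀ b ∈ G, a ≠ b → ¬a ≤ b) :
    betti k M n =
      ((G.powerset.filter fun D => DominantSet D ∧ D.card = n ∧
          ∀ g ∈ G, ¬StronglyDivides g (D.sup id)).image fun D => D.sup id).card := by
  exact hgen ▸ bettiN_eq_card_lcms_general n k G
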